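/- Let m ≥ 2 be an integer and B_1, B_2 > 1 real numbers with B_2 ≤ B_1. Let U = { x ∈ (0,1) irrational : for infinitely many n ∈ ℕ, 1 ≤ a_n(x)·a_{n+1}(x)⋯a_{n+m−2}(x) ≤ B_2^n and a_{n+m−1}(x) ≥ B_1^n/(a_n(x)·a_{n+1}(x)⋯a_{n+m−2}(x)) }. Then dim_H U ≤ g_{B_1,B_2}. -/

import Mathlib

open Filter MeasureTheory Set

/-- The Gauss map `T(x) = 1/x - ⌊1/x⌋`. -/
noncomputable def gaussMap (x : ℝ) : ℝ := 1 / x - (⌊1 / x⌋ : ℤ)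

/-- The `n`-th partial quotient `a_n(x)` (for `n ≥ 1`) of the continued
fraction expansion of `x`: `a_n(x) = ⌊1 / T^{n-1}(x)⌋`. -/
noncomputable def pq (x : ℝ) (n : ℕ) : ℕ := ⌊1 / (gaussMap^[n - 1] x)⌋₊

/-- The continuant `q_n(a_1, …, a_n)`: `q_0 = 1`, `q_1 = a_1`,
`q_k = a_k q_{k-1} + q_{k-2}`. -/
def contQ : (n : ℕ) → (Fin n → ℕ) → ℕ
  | 0, _ => 1
  | 1, a => a 0
  | (n + 2), a =>
      a (Fin.last (n + 1)) * contQ (n + 1) (Fin.init a) +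
        contQ n (Fin.init (Fin.init a))

/-- `s_B`: the Wang–Wu pressure exponent. -/
noncomputable def sExp (B : ℝ) : ℝ :=
  sInf {s : ℝ | 0 ≤ s ∧
    Filter.atTop.limsup (fun n : ℕ =>
      (((n : ℝ)⁻¹ : ℝ) : EReal) * ENNReal.log (∑' a : Fin n → ℕ+,
        ENNReal.ofReal ((B ^ n * ((contQ n fun i => (a i : ℕ)) : ℝ) ^ 2) ^ (-s)))) ≤ 0}

/-- `g_{B₁,B₂}`: the two-parameter pressure exponent. -/
noncomputable def gExp (B₁ B₂ : ℝ) : ℝ :=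
  sInf {s : ℝ | 0 ≤ s ∧
    Filter.atTop.limsup (fun n : ℕ =>
      (((n : ℝ)⁻¹ : ℝ) : EReal) * ENNReal.log (∑' a : Fin n → ℕ+,
        ENNReal.ofReal (B₂ ^ ((1 - s) * (n : ℝ)) *
          (B₁ ^ n * ((contQ n fun i => (a i : ℕ)) : ℝ) ^ 2) ^ (-s)))) ≤ 0}

open scoped MeasureTheory

theorem gm_mem {x : ℝ} (h : x ∈ Ioo (0:ℝ) 1) (hi : Irrational x) :
    gaussMap x ∈ Ioo (0:ℝ) 1 ∧ Irrational (gaussMap x) := by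
  have h1 : Irrational (gaussMap x) := by
    unfold gaussMap
    rw [one_div]
    exact (irrational_inv_iff.2 hi).sub_intCast _
  refine ⟨⟨?_, ?_⟩, h1⟩
  · refine lt_of_le_of_ne ?_ h1.ne_zero.symm
    unfold gaussMap
    linarith [Int.floor_le (1 / x)]
  · unfold gaussMap
    linarith [Int.lt_floor_add_one (1 / x)]

theorem gm_iter {x : ℝ} (h : x ∈ Ioo (0:ℝ) 1) (hi : Irrational x) (k : ℕ) :
    gaussMap^[k] x ∈ Ioo (0:ℝ) 1 ∧ Irrational (gaussMap^[k] x) := by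
  induction k with
  | zero => exact ⟨h, hi⟩
  | succ k ih =>
    rw [Function.iterate_succ_apply']
    exact gm_mem ih.1 ih.2

theorem gm_mul {x : ℝ} (h : x ∈ Ioo (0:ℝ) 1) (hi : Irrational x) (k : ℕ) :
    gaussMap^[k] x * (pq x (k + 1) + gaussMap^[k+1] x) = 1 := by
  obtain ⟨⟨h0, h1⟩, h2⟩ := gm_iter h hi k
  rw [Function.iterate_succ_apply']
  simp only [pq, Nat.add_sub_cancel]
  set u := gaussMap^[k] x
  have : ((⌊1 / u⌋₊ : ℕ) : ℝ) = (⌊1 / u⌋ : ℤ) := by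
    exact natCast_floor_eq_intCast_floor (by positivity)
  rw [this, gaussMap]
  field_simp
  ring

theorem pq_pos {x : ℝ} (h : x ∈ Ioo (0:ℝ) 1) (hi : Irrational x) (k : ℕ) :
    0 < pq x (k + 1) := by
  obtain ⟨⟨h0, h1⟩, h2⟩ := gm_iter h hi k
  simp only [pq, Nat.add_sub_cancel]
  rw [Nat.floor_pos, le_div_iff₀ h0]
  linarith

theorem gm_le {x : ℝ} (h : x ∈ Ioo (0:ℝ) 1) (hi : Irrational x) (k : ℕ) :
    gaussMap^[k] x ≤ 1 / (pq x (k + 1) : ℝ) := by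
  have hp : (0:ℝ) < pq x (k+1) := by exact_mod_cast pq_pos h hi k
  have := gm_mul h hi k
  have h1 := (gm_iter h hi k).1.1
  have h2 := (gm_iter h hi (k+1)).1.1
  rw [le_div_iff₀ hp]
  nlinarith [mul_pos h1 h2]

theorem prod_contQ {x : ℝ} (h : x ∈ Ioo (0:ℝ) 1) (hi : Irrational x) (k : ℕ) :
    (∏ i ∈ Finset.range (k+1), gaussMap^[i] x) *
      ((contQ (k+1) fun i => pq x (i + 1)) +
        (contQ k fun i => pq x (i + 1)) * gaussMap^[k+1] x) = 1 := by
  induction k with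
  | zero =>
    have := gm_mul h hi 0
    simpa [contQ] using this
  | succ k ih =>
    have := gm_mul h hi (k+1)
    rw [Finset.prod_range_succ]
    have e : (contQ (k+1+1) fun i => pq x (i + 1)) = pq x (k+1+1) *
      (contQ (k+1) fun i => pq x (i + 1)) + (contQ k fun i => pq x (i + 1)) := by
      simp only [contQ, Fin.val_last]
      rfl
    rw [e]
    push_cast
    linear_combination ih + (∏ i ∈ Finset.range (k+1), gaussMap^[i] x) *
      (contQ (k+1) fun i => pq x (i + 1)) * this

theorem prod_nonneg' {x : ℝ} (h : x ∈ Ioo (0:ℝ) 1) (hi : Irrational x) (k c : ℕ) :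
    0 ≤ ∏ i ∈ Finset.range k, gaussMap^[c + i] x :=
  Finset.prod_nonneg fun i _ => (gm_iter h hi _).1.1.le

theorem prod_le_contQ {x : ℝ} (h : x ∈ Ioo (0:ℝ) 1) (hi : Irrational x) (k : ℕ) :
    (∏ i ∈ Finset.range k, gaussMap^[i] x) * (contQ k fun i => pq x (i + 1)) ≤ 1 := by
  cases k with
  | zero => simp [contQ]
  | succ k =>
    rw [← prod_contQ h hi k]
    have h1 := prod_nonneg' h hi (k+1) 0
    simp only [zero_add] at h1
    have h2 := (gm_iter h hi (k+1)).1.1.le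
    gcongr
    have : (0:ℝ) ≤ (contQ k fun i => pq x (i + 1)) := by positivity
    nlinarith [mul_nonneg this h2]

theorem contQ_pos (k : ℕ) (a : Fin k → ℕ+) : 1 ≤ contQ k fun i => (a i : ℕ) := by
  induction k using Nat.strong_induction_on with
  | _ k ih =>
    match k, a with
    | 0, a => simp [contQ]
    | 1, a => exact (a 0).pos
    | k+2, a =>
      have h := ih (k+1) (by omega) (Fin.init a)
      have h2 := (a (Fin.last (k+1))).pos
      simp only [contQ]
      exact le_add_right (Nat.mul_pos h2 h)

theorem prod_le_contQ' (k : ℕ) (a : Fin k → ℕ+) :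
    ∏ i, (a i : ℕ) ≤ contQ k fun i => (a i : ℕ) := by
  induction k using Nat.strong_induction_on with
  | _ k ih =>
    match k, a with
    | 0, a => simp [contQ]
    | 1, a => simp [contQ]
    | k+2, a =>
      have h := ih (k+1) (by omega) (Fin.init a)
      simp only [contQ]
      rw [Fin.prod_univ_castSucc, mul_comm]
      exact le_add_right (Nat.mul_le_mul_left _ h)

theorem dist_iter {x y : ℝ} (hx : x ∈ Ioo (0:ℝ) 1) (hxi : Irrational x)
    (hy : y ∈ Ioo (0:ℝ) 1) (hyi : Irrational y) (k : ℕ)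
    (h : ∀ i < k, pq x (i+1) = pq y (i+1)) :
    |x - y| = (∏ i ∈ Finset.range k, gaussMap^[i] x) * (∏ i ∈ Finset.range k, gaussMap^[i] y)
      * |gaussMap^[k] x - gaussMap^[k] y| := by
  induction k with
  | zero => simp
  | succ k ih =>
    rw [ih fun i hi => h i (by omega), Finset.prod_range_succ, Finset.prod_range_succ]
    have h1 := gm_mul hx hxi k
    have h2 := gm_mul hy hyi k
    rw [← h k (by omega)] at h2
    have hu := (gm_iter hx hxi k).1.1
    have hv := (gm_iter hy hyi k).1.1
    have : gaussMap^[k] x - gaussMap^[k] y = -(gaussMap^[k] x * gaussMap^[k] y) *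
      (gaussMap^[k+1] x - gaussMap^[k+1] y) := by
      linear_combination -gaussMap^[k] x * h2 + gaussMap^[k] y * h1
    rw [this, abs_mul, abs_neg, abs_of_pos (mul_pos hu hv)]
    ring

def covJ (B₁ B₂ : ℝ) (M k : ℕ) (a : Fin k → ℕ+) (b : Fin M → ℕ+) : Set ℝ :=
  {x | x ∈ Ioo (0:ℝ) 1 ∧ Irrational x ∧ (∀ i : Fin k, pq x (i+1) = a i) ∧
    (∀ j : Fin M, pq x (k + 1 + j) = b j) ∧ (∏ j, ((b j : ℕ) : ℝ)) ≤ B₂ ^ (k+1) ∧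
    B₁ ^ (k+1) / (∏ j, ((b j : ℕ) : ℝ)) ≤ pq x (k + 1 + M)}

theorem covJ_dist {B₁ B₂ : ℝ} (hB₁ : 1 < B₁) {M k : ℕ} {a : Fin k → ℕ+} {b : Fin M → ℕ+}
    {x y : ℝ} (hx : x ∈ covJ B₁ B₂ M k a b) (hy : y ∈ covJ B₁ B₂ M k a b) :
    |x - y| ≤ (B₁ ^ (k+1) * (contQ k fun i => (a i : ℕ)) ^ 2 * ∏ j, ((b j : ℕ) : ℝ))⁻¹ := by
  have key : ∀ z ∈ covJ B₁ B₂ M k a b, 0 ≤ (∏ i ∈ Finset.range (k+M), gaussMap^[i] z) ∧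
      (∏ i ∈ Finset.range (k+M), gaussMap^[i] z) ≤
      ((contQ k fun i => (a i : ℕ)) * ∏ j, ((b j : ℕ) : ℝ))⁻¹ ∧
      0 < gaussMap^[k+M] z ∧ gaussMap^[k+M] z ≤ (∏ j, ((b j : ℕ) : ℝ)) / B₁ ^ (k+1) := by
    rintro z ⟨hz, hzi, ha, hb, -, hP⟩
    have hPp : 0 < ∏ j, ((b j : ℕ) : ℝ) := Finset.prod_pos fun j _ => by
      exact_mod_cast (b j).pos
    have hq : (0:ℝ) < (contQ k fun i => (a i : ℕ)) := by exact_mod_cast contQ_pos k a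
    have hBk : 0 < B₁ ^ (k+1) := by positivity
    refine ⟨?_, ?_, (gm_iter hz hzi _).1.1, ?_⟩
    · simpa using prod_nonneg' hz hzi (k+M) 0
    · rw [Finset.prod_range_add, mul_inv]
      refine mul_le_mul ?_ ?_ (prod_nonneg' hz hzi _ _) (by positivity)
      · have := prod_le_contQ hz hzi k
        simp only [ha] at this
        rwa [← one_div, le_div_iff₀ hq]
      · rw [← Finset.prod_inv_distrib, Finset.prod_range]
        refine Finset.prod_le_prod (fun i _ => (gm_iter hz hzi _).1.1.le) fun i _ => ?_
        have := gm_le hz hzi (k + i)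
        rw [show k + (i:ℕ) + 1 = k + 1 + i by ring, hb] at this
        rwa [← one_div]
    · have := gm_le hz hzi (k + M)
      rw [show k + M + 1 = k + 1 + M by ring] at this
      refine this.trans ?_
      rw [← one_div_div (B₁ ^ (k+1))]
      exact one_div_le_one_div_of_le (by positivity) hP
  obtain ⟨x1, x2, x3, x4⟩ := key x hx
  obtain ⟨y1, y2, y3, y4⟩ := key y hy
  have hPp : 0 < ∏ j, ((b j : ℕ) : ℝ) := Finset.prod_pos fun j _ => by
    exact_mod_cast (b j).pos
  have hq : (0:ℝ) < (contQ k fun i => (a i : ℕ)) := by exact_mod_cast contQ_pos k a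
  have hBk : 0 < B₁ ^ (k+1) := by positivity
  obtain ⟨hx, hxi, hxa, hxb, -⟩ := hx
  obtain ⟨hy, hyi, hya, hyb, -⟩ := hy
  rw [dist_iter hx hxi hy hyi (k+M)]
  · calc _ ≤ ((contQ k fun i => (a i : ℕ)) * ∏ j, ((b j : ℕ) : ℝ))⁻¹ *
        ((contQ k fun i => (a i : ℕ)) * ∏ j, ((b j : ℕ) : ℝ))⁻¹ *
        ((∏ j, ((b j : ℕ) : ℝ)) / B₁ ^ (k+1)) := by
          refine mul_le_mul (mul_le_mul x2 y2 y1 (by positivity)) ?_ (abs_nonneg _) (by positivity)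
          rw [abs_le]
          constructor <;> linarith
      _ = _ := by field_simp
  · intro i hi
    by_cases h : i < k
    · rw [hxa ⟨i, h⟩, hya ⟨i, h⟩]
    · have h1 := hxb ⟨i - k, by omega⟩
      have h2 := hyb ⟨i - k, by omega⟩
      simp only [show k + 1 + (i - k) = i + 1 by omega] at h1 h2
      rw [h1, h2]

theorem real_bound {B₁ B₂ s e P q : ℝ} (hB₁ : 1 < B₁) (hB₂ : 1 < B₂) (hs : 0 ≤ s) (hs1 : s ≤ 1)
    (he : 0 < e) (k : ℕ) (hP : 1 ≤ P) (hPB : P ≤ B₂ ^ (k+1)) (hq : 1 ≤ q) :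
    ((B₁ ^ (k+1) * q ^ 2 * P)⁻¹) ^ (s + e) ≤
      (B₂ ^ ((1 - s) * (k:ℝ)) * (B₁ ^ k * q ^ 2) ^ (-s)) * (B₂ ^ (1 - s) * (B₁ ^ (-e)) ^ k)
        * P ^ (-(1 + e)) := by
  have hBk : 1 ≤ B₁ ^ k := one_le_pow₀ hB₁.le
  have hP0 : 0 < P := by linarith
  have hq2 : 1 ≤ q ^ 2 := one_le_pow₀ hq
  have e1 : ((B₁ ^ (k+1) * q ^ 2 * P)⁻¹) ^ (s + e) ≤ (B₁ ^ k * q ^ 2 * P) ^ (-(s+e)) := by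
    rw [Real.rpow_neg (by positivity), ← Real.inv_rpow (by positivity)]
    gcongr
    · exact hB₁.le
    · omega
  refine e1.trans ?_
  rw [Real.mul_rpow (by positivity) (by positivity), neg_add, Real.rpow_add (by positivity)]
  have e2 : (B₁ ^ k * q ^ 2) ^ (-e) ≤ (B₁ ^ (-e)) ^ k := by
    rw [← Real.rpow_natCast (B₁ ^ (-e)), ← Real.rpow_mul (by positivity), mul_comm (-e),
      Real.rpow_mul (by positivity), Real.rpow_natCast]
    refine Real.rpow_le_rpow_of_nonpos (by positivity) ?_ (by linarith)
    nlinarith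
  have e3 : P ^ (-s + -e) ≤ B₂ ^ ((1 - s) * (k:ℝ)) * B₂ ^ (1 - s) * P ^ (-(1 + e)) := by
    rw [show -s + -e = (1 - s) + (-(1+e)) by ring, Real.rpow_add hP0,
      ← Real.rpow_add (show 0 < B₂ by positivity), show (1 - s) * (k:ℝ) + (1 - s) = ((k+1 : ℕ) : ℝ) * (1 - s) by
        push_cast; ring, Real.rpow_mul (by positivity), Real.rpow_natCast]
    gcongr
  calc _ ≤ (B₁ ^ k * q ^ 2) ^ (-s) * (B₁ ^ (-e)) ^ k *
      (B₂ ^ ((1 - s) * (k:ℝ)) * B₂ ^ (1 - s) * P ^ (-(1 + e))) := by gcongr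
    _ = _ := by ring

theorem tsum_prod_pow (f : ℕ+ → ENNReal) (n : ℕ) :
    ∑' a : Fin n → ℕ+, ∏ i, f (a i) = (∑' a, f a) ^ n := by
  induction n with
  | zero => simp
  | succ n ih =>
    rw [← (Fin.consEquiv fun _ : Fin (n+1) => ℕ+).tsum_eq, ENNReal.tsum_prod']
    simp only [Fin.consEquiv, Equiv.coe_fn_mk, Fin.prod_univ_succ, Fin.cons_zero, Fin.cons_succ]
    simp only [ENNReal.tsum_mul_left, ih, ENNReal.tsum_mul_right, pow_succ, mul_comm]

theorem zeta_ne_top {p : ℝ} (hp : 1 < p) : ∑' a : ℕ+, ENNReal.ofReal (((a : ℕ) : ℝ) ^ (-p)) ≠ ⊤ := by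
  have h : Summable fun a : ℕ+ => (((a : ℕ) : ℝ) ^ (-p)) :=
    (Real.summable_nat_rpow.2 (by linarith)).comp_injective PNat.coe_injective
  rw [← ENNReal.ofReal_tsum_of_nonneg (fun _ => by positivity) h]
  exact ENNReal.ofReal_ne_top

noncomputable def Zsum (B₁ B₂ s : ℝ) (n : ℕ) : ENNReal := ∑' a : Fin n → ℕ+,
        ENNReal.ofReal (B₂ ^ ((1 - s) * (n : ℝ)) *
          (B₁ ^ n * ((contQ n fun i => (a i : ℕ)) : ℝ) ^ 2) ^ (-s))

theorem covJ_sum {B₁ B₂ s e : ℝ} (hB₁ : 1 < B₁) (hB₂ : 1 < B₂) (hs : 0 ≤ s) (hs1 : s ≤ 1)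
    (he : 0 < e) (M k : ℕ) :
    ∑' ab : (Fin k → ℕ+) × (Fin M → ℕ+), (Metric.ediam (covJ B₁ B₂ M k ab.1 ab.2)) ^ (s + e) ≤
      Zsum B₁ B₂ s k * ENNReal.ofReal (B₂ ^ (1 - s) * (B₁ ^ (-e)) ^ k) *
        (∑' a : ℕ+, ENNReal.ofReal (((a : ℕ) : ℝ) ^ (-(1 + e)))) ^ M := by
  rw [ENNReal.tsum_prod', Zsum, ← ENNReal.tsum_mul_right, ← ENNReal.tsum_mul_right]
  refine ENNReal.tsum_le_tsum fun a => ?_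
  rw [← tsum_prod_pow, ← ENNReal.tsum_mul_left]
  refine ENNReal.tsum_le_tsum fun b => ?_
  rcases Set.eq_empty_or_nonempty (covJ B₁ B₂ M k a b) with h | ⟨x, hx⟩
  · simp only [h, Metric.ediam_empty]
    rw [ENNReal.zero_rpow_of_pos (by linarith)]
    exact zero_le
  · have hP : (1:ℝ) ≤ ∏ j, ((b j : ℕ) : ℝ) := by
      exact_mod_cast Finset.one_le_prod' (f := fun j => (b j : ℕ)) fun j _ => (b j).pos
    have hq : (1:ℝ) ≤ (contQ k fun i => (a i : ℕ)) := by exact_mod_cast contQ_pos k a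
    have hd : Metric.ediam (covJ B₁ B₂ M k a b) ≤ ENNReal.ofReal
        (B₁ ^ (k+1) * (contQ k fun i => (a i : ℕ)) ^ 2 * ∏ j, ((b j : ℕ) : ℝ))⁻¹ := by
      refine Metric.ediam_le fun x hx y hy => ?_
      rw [edist_dist, Real.dist_eq]
      exact ENNReal.ofReal_le_ofReal (covJ_dist hB₁ hx hy)
    refine (ENNReal.rpow_le_rpow hd (by linarith)).trans ?_
    rw [ENNReal.ofReal_rpow_of_nonneg (by positivity) (by linarith),
      ← ENNReal.ofReal_prod_of_nonneg (fun _ _ => by positivity), ← ENNReal.ofReal_mul (by positivity),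
      ← ENNReal.ofReal_mul (by positivity), Real.finsetProd_rpow _ _ (fun _ _ => by positivity)]
    exact ENNReal.ofReal_le_ofReal (real_bound hB₁ hB₂ hs hs1 he k hP hx.2.2.2.2.1 hq)

theorem Zsum_le {B₁ B₂ s h : ℝ} (hh : 0 < h) (hs : Filter.atTop.limsup (fun n : ℕ =>
      (((n : ℝ)⁻¹ : ℝ) : EReal) * ENNReal.log (Zsum B₁ B₂ s n)) ≤ 0) :
    ∀ᶠ n : ℕ in atTop, Zsum B₁ B₂ s n ≤ ENNReal.ofReal (Real.exp h ^ n) := by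
  have h1 := eventually_lt_of_limsup_lt (lt_of_le_of_lt hs (EReal.coe_pos.2 hh))
  filter_upwards [h1, eventually_gt_atTop 0] with n hn hn0
  by_contra! hc
  have hn' : (0:ℝ) < n := by exact_mod_cast hn0
  have h2 := ENNReal.log_le_log hc.le
  rw [ENNReal.log_ofReal_of_pos (by positivity), Real.log_pow, Real.log_exp] at h2
  have h3 : (((n : ℝ)⁻¹ : ℝ) : EReal) * ((n * h : ℝ) : EReal) ≤
    (((n : ℝ)⁻¹ : ℝ) : EReal) * ENNReal.log (Zsum B₁ B₂ s n) :=
    mul_le_mul_of_nonneg_left h2 (by exact_mod_cast (inv_pos.2 hn').le)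
  rw [← EReal.coe_mul, inv_mul_cancel_left₀ hn'.ne'] at h3
  exact absurd hn (not_lt.2 h3)

theorem set_nonempty {B₁ B₂ : ℝ} (hB₁ : 1 < B₁) (hB₂ : 1 < B₂) : ∃ s : ℝ, 0 ≤ s ∧
    Filter.atTop.limsup (fun n : ℕ =>
      (((n : ℝ)⁻¹ : ℝ) : EReal) * ENNReal.log (Zsum B₁ B₂ s n)) ≤ 0 := by
  set ζ := ∑' a : ℕ+, ENNReal.ofReal (((a : ℕ) : ℝ) ^ (-(2:ℝ))) with hζ
  have hζt : ζ ≠ ⊤ := zeta_ne_top (by norm_num)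
  obtain ⟨N, hN⟩ := pow_unbounded_of_one_lt ζ.toReal hB₁
  set s : ℝ := N + 1 with hs
  have hs1 : 1 ≤ s := by simp [hs]
  refine ⟨s, by linarith, ?_⟩
  refine limsup_le_of_le (by isBoundedDefault) (Eventually.of_forall fun n => ?_)
  have hZ : Zsum B₁ B₂ s n ≤ 1 := by
    calc Zsum B₁ B₂ s n ≤ ∑' a : Fin n → ℕ+, ENNReal.ofReal (B₁ ^ (-s)) ^ n *
          ∏ i, ENNReal.ofReal (((a i : ℕ) : ℝ) ^ (-(2:ℝ))) := by
          refine ENNReal.tsum_le_tsum fun a => ?_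
          rw [← ENNReal.ofReal_prod_of_nonneg (fun _ _ => by positivity),
            ← ENNReal.ofReal_pow (by positivity), ← ENNReal.ofReal_mul (by positivity),
            Real.finsetProd_rpow _ _ (fun _ _ => by positivity)]
          refine ENNReal.ofReal_le_ofReal ?_
          have hq : (1:ℝ) ≤ (contQ n fun i => (a i : ℕ)) := by exact_mod_cast contQ_pos n a
          have hP : (1:ℝ) ≤ ∏ j, ((a j : ℕ) : ℝ) := by
            exact_mod_cast Finset.one_le_prod' (f := fun j => (a j : ℕ)) fun j _ => (a j).pos
          have hPq : ∏ j, ((a j : ℕ) : ℝ) ≤ (contQ n fun i => (a i : ℕ)) := by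
            exact_mod_cast prod_le_contQ' n a
          have e1 : B₂ ^ ((1 - s) * (n:ℝ)) ≤ 1 :=
            Real.rpow_le_one_of_one_le_of_nonpos hB₂.le
              (mul_nonpos_of_nonpos_of_nonneg (by linarith) (by positivity))
          rw [Real.mul_rpow (by positivity) (by positivity)]
          have e2 : (B₁ ^ n) ^ (-s) = (B₁ ^ (-s)) ^ n := by
            rw [← Real.rpow_natCast, ← Real.rpow_natCast, ← Real.rpow_mul (by positivity),
              ← Real.rpow_mul (by positivity), mul_comm]
          have e3 : (((contQ n fun i => (a i : ℕ)) : ℝ) ^ 2) ^ (-s) ≤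
              (∏ j, ((a j : ℕ) : ℝ)) ^ (-(2:ℝ)) := by
            rw [← Real.rpow_natCast _ 2, ← Real.rpow_mul (by positivity)]
            refine (Real.rpow_le_rpow_of_exponent_le hq (y := ((2:ℕ):ℝ) * -s) (z := -2) ?_).trans ?_
            · push_cast; linarith
            · exact Real.rpow_le_rpow_of_nonpos (by positivity) hPq (by norm_num)
          rw [e2]
          calc _ ≤ 1 * ((B₁ ^ (-s)) ^ n * (∏ j, ((a j : ℕ) : ℝ)) ^ (-(2:ℝ))) := by gcongr
            _ = _ := one_mul _
      _ = (ENNReal.ofReal (B₁ ^ (-s)) * ζ) ^ n := by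
          rw [ENNReal.tsum_mul_left, tsum_prod_pow (fun a => ENNReal.ofReal (((a : ℕ) : ℝ) ^ (-(2:ℝ)))),
            mul_pow]
      _ ≤ 1 := by
          refine pow_le_one₀ zero_le ?_
          rw [← ENNReal.ofReal_toReal hζt, ← ENNReal.ofReal_mul (by positivity)]
          refine ENNReal.ofReal_le_one.2 ?_
          rw [Real.rpow_neg (by positivity), inv_mul_le_iff₀ (by positivity), mul_one]
          refine hN.le.trans ?_
          rw [← Real.rpow_natCast]
          exact Real.rpow_le_rpow_of_exponent_le hB₁.le (by simp [hs])
  have h2 := ENNReal.log_le_log hZ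
  rw [ENNReal.log_one] at h2
  exact mul_nonpos_of_nonneg_of_nonpos (by exact_mod_cast (by positivity : (0:ℝ) ≤ (n:ℝ)⁻¹)) h2

theorem dim_le_aux {B₁ B₂ s e : ℝ} (hB₁ : 1 < B₁) (hB₂ : 1 < B₂) (hs : 0 ≤ s) (hs1 : s ≤ 1)
    (he : 0 < e) (M : ℕ) (U : Set ℝ)
    (hU : ∀ x ∈ U, ∃ᶠ k in atTop, ∃ a b, x ∈ covJ B₁ B₂ M k a b)
    (hlim : Filter.atTop.limsup (fun n : ℕ =>
      (((n : ℝ)⁻¹ : ℝ) : EReal) * ENNReal.log (Zsum B₁ B₂ s n)) ≤ 0) :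
    dimH U ≤ ENNReal.ofReal (s + e) := by
  set ζ := ∑' a : ℕ+, ENNReal.ofReal (((a : ℕ) : ℝ) ^ (-(1 + e))) with hζ
  have hζt : ζ ≠ ⊤ := zeta_ne_top (by linarith)
  have hlog := Real.log_pos hB₁
  have hZ := Zsum_le (h := e / 2 * Real.log B₁) (by positivity) hlim
  set ρ : ℝ := Real.exp (e / 2 * Real.log B₁) * B₁ ^ (-e) with hρ
  have hρ0 : 0 < ρ := by positivity
  have hρ1 : ρ < 1 := by
    rw [hρ, Real.rpow_def_of_pos (by positivity), ← Real.exp_add, Real.exp_lt_one_iff]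
    nlinarith
  set G : ℕ → ENNReal := fun k => (ENNReal.ofReal (B₂ ^ (1 - s)) * ζ ^ M) * ENNReal.ofReal ρ ^ k
  have hG : ∑' k, G k ≠ ⊤ := by
    rw [ENNReal.tsum_mul_left, ENNReal.tsum_geometric]
    refine ENNReal.mul_ne_top (ENNReal.mul_ne_top ENNReal.ofReal_ne_top (ENNReal.pow_ne_top hζt)) ?_
    rw [ENNReal.inv_ne_top]
    exact (tsub_pos_of_lt (ENNReal.ofReal_lt_one.2 hρ1)).ne'
  set F : ℕ → ENNReal := fun k => ∑' ab : (Fin k → ℕ+) × (Fin M → ℕ+),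
    (Metric.ediam (covJ B₁ B₂ M k ab.1 ab.2)) ^ (s + e) with hF
  have hFG : ∀ᶠ k in atTop, F k ≤ G k := by
    filter_upwards [hZ] with k hk
    refine (covJ_sum hB₁ hB₂ hs hs1 he M k).trans ?_
    refine (mul_le_mul_left (mul_le_mul_left hk _) _).trans (le_of_eq ?_)
    simp only [G]
    rw [ENNReal.ofReal_mul (by positivity), hρ, ENNReal.ofReal_mul (by positivity), mul_pow,
      ENNReal.ofReal_pow (by positivity), ENNReal.ofReal_pow (by positivity)]
    ring
  have hmeas : μH[s + e] U ≤ 0 := by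
    have h := Measure.hausdorffMeasure_le_liminf_tsum (l := atTop) (s + e) U
      (ι := fun N : ℕ => Σ k : ℕ, (Fin (N + k) → ℕ+) × (Fin M → ℕ+))
      (fun N => ENNReal.ofReal (B₁⁻¹ ^ N)) ?_
      (fun N i => covJ B₁ B₂ M (N + i.1) i.2.1 i.2.2) ?_ ?_
    · refine h.trans ?_
      have hT : Tendsto (fun N => ∑' k, G (k + N)) atTop (nhds 0) :=
        ENNReal.tendsto_sum_nat_add G hG
      rw [← hT.liminf_eq]
      refine liminf_le_liminf ?_
      obtain ⟨K, hK⟩ := eventually_atTop.1 hFG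
      filter_upwards [eventually_ge_atTop K] with N hN
      rw [ENNReal.tsum_sigma']
      refine ENNReal.tsum_le_tsum fun k => ?_
      rw [add_comm k N]
      exact hK (N + k) (by omega)
    · have := tendsto_pow_atTop_nhds_zero_of_lt_one (r := B₁⁻¹) (by positivity)
        (inv_lt_one_of_one_lt₀ hB₁)
      simpa using ENNReal.tendsto_ofReal this
    · refine Eventually.of_forall fun N ⟨k, a, b⟩ => ?_
      refine Metric.ediam_le fun x hx y hy => ?_
      rw [edist_dist, Real.dist_eq]
      refine ENNReal.ofReal_le_ofReal ((covJ_dist hB₁ hx hy).trans ?_)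
      rw [inv_pow]
      have hP : (1:ℝ) ≤ ∏ j, ((b j : ℕ) : ℝ) := by
        exact_mod_cast Finset.one_le_prod' (f := fun j => (b j : ℕ)) fun j _ => (b j).pos
      have hq : (1:ℝ) ≤ (contQ (N+k) fun i => (a i : ℕ)) := by exact_mod_cast contQ_pos _ a
      have hq2 := one_le_pow₀ hq (n := 2)
      have hB : B₁ ^ N ≤ B₁ ^ (N + k + 1) := pow_le_pow_right₀ hB₁.le (by omega)
      have hB0 : 0 < B₁ ^ N := by positivity
      refine inv_anti₀ hB0 ?_
      calc B₁ ^ N = B₁ ^ N * 1 * 1 := by ring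
        _ ≤ _ := by gcongr
    · refine Eventually.of_forall fun N x hx => ?_
      obtain ⟨k, hk, a, b, hab⟩ := frequently_atTop.1 (hU x hx) N
      obtain ⟨d, rfl⟩ := Nat.exists_eq_add_of_le hk
      exact mem_iUnion.2 ⟨⟨d, a, b⟩, hab⟩
  have h0 : μH[((s + e).toNNReal : ℝ)] U ≠ ⊤ := by
    rw [Real.coe_toNNReal _ (by linarith)]
    exact (lt_of_le_of_lt hmeas ENNReal.zero_lt_top).ne
  exact dimH_le_of_hausdorffMeasure_ne_top h0

theorem upper_bound_U (m : ℕ) (hm : 2 ≤ m) (B₁ B₂ : ℝ)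
    (hB₁ : 1 < B₁) (hB₂ : 1 < B₂) (hle : B₂ ≤ B₁) :
    dimH {x : ℝ | x ∈ Set.Ioo (0 : ℝ) 1 ∧ Irrational x ∧
      {n : ℕ | (1 ≤ ∏ i ∈ Finset.range (m - 1), (pq x (n + i) : ℝ) ∧
          ∏ i ∈ Finset.range (m - 1), (pq x (n + i) : ℝ) ≤ B₂ ^ n) ∧
        B₁ ^ n / ∏ i ∈ Finset.range (m - 1), (pq x (n + i) : ℝ) ≤
          (pq x (n + (m - 1)) : ℝ)}.Infinite} ≤
    ENNReal.ofReal (gExp B₁ B₂) := by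
  set U := {x : ℝ | x ∈ Set.Ioo (0 : ℝ) 1 ∧ Irrational x ∧
      {n : ℕ | (1 ≤ ∏ i ∈ Finset.range (m - 1), (pq x (n + i) : ℝ) ∧
          ∏ i ∈ Finset.range (m - 1), (pq x (n + i) : ℝ) ≤ B₂ ^ n) ∧
        B₁ ^ n / ∏ i ∈ Finset.range (m - 1), (pq x (n + i) : ℝ) ≤
          (pq x (n + (m - 1)) : ℝ)}.Infinite} with hUdef
  have hU : ∀ x ∈ U, ∃ᶠ k in atTop, ∃ a b, x ∈ covJ B₁ B₂ (m - 1) k a b := by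
    rintro x ⟨hx, hxi, hinf⟩
    rw [frequently_atTop]
    intro N
    obtain ⟨n, ⟨⟨-, h2⟩, h3⟩, hn⟩ := hinf.exists_gt N
    obtain ⟨k, rfl⟩ : ∃ k, n = k + 1 := ⟨n - 1, by omega⟩
    refine ⟨k, by omega, fun i => ⟨pq x (i+1), pq_pos hx hxi i⟩,
      fun j => ⟨pq x (k + 1 + j), by
        rw [show k + 1 + (j:ℕ) = k + j + 1 by ring]; exact pq_pos hx hxi _⟩,
      hx, hxi, fun i => rfl, fun j => rfl, ?_, ?_⟩
    · simpa [Finset.prod_range] using h2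
    · simpa [Finset.prod_range] using h3
  have h1 : dimH U ≤ 1 := (dimH_mono (subset_univ U)).trans (le_of_eq Real.dimH_univ)
  have hfin : dimH U ≠ ⊤ := (lt_of_le_of_lt h1 ENNReal.one_lt_top).ne
  rw [← ENNReal.ofReal_toReal hfin]
  refine ENNReal.ofReal_le_ofReal ?_
  refine le_csInf (set_nonempty hB₁ hB₂) ?_
  rintro s ⟨hs, hlim⟩
  rcases le_total s 1 with hs1 | hs1
  · refine le_of_forall_pos_le_add fun e he => ?_
    exact ENNReal.toReal_le_of_le_ofReal (by linarith)
      (dim_le_aux hB₁ hB₂ hs hs1 he (m - 1) U hU hlim)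
  · refine le_trans ?_ hs1
    exact ENNReal.toReal_le_of_le_ofReal zero_le_one (by simpa using h1)
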